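/- arXiv:1405.1795 — 2 statements merged into one kernel-verified Lean document; each statement's English description precedes it below -/
import Mathlib

section
/- Let N be a nilpotent-independent (NI) subset of M(d,q). Then, as an identity of real numbers, |N|/|GL(d,q)| = \sum_{i=0}^{d} (q^{-(d-i)}/\omega(d-i,q)) \cdot (|N_i|/|GL(i,q)|), where |GL(0,q)| = 1. -/
open Matrix Finset

/-- `Vinv X` : the "invertible part" subspace, `range (X^d)`. -/
noncomputable def Vinv {F : Type*} [Field F] {d : ℕ} (X : Matrix (Fin d) (Fin d) F) :
    Submodule F (Fin d → F) :=
  LinearMap.range (X.mulVecLin ^ d)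

noncomputable def Vnil {F : Type*} [Field F] {d : ℕ} (X : Matrix (Fin d) (Fin d) F) :
    Submodule F (Fin d → F) :=
  LinearMap.ker (X.mulVecLin ^ d)

open Classical in
/-- The projection of `F^d` onto `Vinv X` with kernel `Vnil X`. -/
noncomputable def fittingProj {F : Type*} [Field F] {d : ℕ} (X : Matrix (Fin d) (Fin d) F) :
    (Fin d → F) →ₗ[F] (Fin d → F) :=
  if h : IsCompl (Vinv X) (Vnil X) then
    (Vinv X).subtype ∘ₗ Submodule.linearProjOfIsCompl (Vinv X) (Vnil X) h
  else 0

/-- `N` is a nilpotent-independent subset of `M(d,q)`. -/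
def IsNI {F : Type*} [Field F] {d : ℕ} (N : Set (Matrix (Fin d) (Fin d) F)) : Prop :=
  (∀ X ∈ N, ∀ g : GL (Fin d) F, (↑g⁻¹ : Matrix (Fin d) (Fin d) F) * X * (↑g : Matrix (Fin d) (Fin d) F) ∈ N) ∧
  (∀ X : Matrix (Fin d) (Fin d) F,
    X ∈ N ↔ LinearMap.toMatrix' (X.mulVecLin ∘ₗ fittingProj X) ∈ N)

/-- the block-diagonal matrix `diag(Y, 0)` of size `d`, for `Y` of size `i ≤ d`. -/
def embedBlock {F : Type*} [Field F] (d : ℕ) {i : ℕ} (Y : Matrix (Fin i) (Fin i) F) :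
    Matrix (Fin d) (Fin d) F :=
  Matrix.of fun r c =>
    if h : (r : ℕ) < i ∧ (c : ℕ) < i then Y ⟨r, h.1⟩ ⟨c, h.2⟩ else 0

/-- `N_i`, the invertible matrices of size `i` whose block-diagonal extension lies in `N`. -/
def NIsub {F : Type*} [Field F] {d : ℕ} (N : Set (Matrix (Fin d) (Fin d) F)) (i : ℕ) :
    Set (GL (Fin i) F) :=
  {Y : GL (Fin i) F | embedBlock d (↑Y : Matrix (Fin i) (Fin i) F) ∈ N}

/-- `ω(j,q) = ∏_{k=1}^j (1 - q^{-k})`. -/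
noncomputable def omegaqd (j q : ℕ) : ℝ :=
  ∏ k ∈ Finset.Icc 1 j, (1 - ((q : ℝ))⁻¹ ^ k)

/-!
By Fitting's lemma, every `X` with `dim V_inv(X) = i` is conjugate to some `diag(Y, Z)` with
`Y ∈ GL(i,q)` and `Z` nilpotent of size `d - i`, and for an NI set `N` membership of `diag(Y, Z)`
depends only on `Y`. A matrix conjugating one such block-diagonal matrix to another is itself
block-diagonal, so counting conjugates gives
`|N(i)| / |GL(d,q)| = ν(d - i) * |N_i| / |GL(i,q)|`, where `ν(n) * |GL(n,q)|` is the number of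
nilpotent `n × n` matrices. Summing over `i` and taking `N = M(d,q)` turns this into
`1 / ω(d,q) = ∑ j ≤ d, ν(j)`, and differences of consecutive values of `d` yield
`ν(n) = q⁻ⁿ / ω(n,q)`.
-/

section ConjugacyCount

variable {A B : Type*} [Monoid A] [Monoid B] {φ : A →* B}

theorem mem_range_units_map_of_mem_mrange (hφ : Function.Injective φ) {g : Bˣ}
    (hg : ↑g ∈ MonoidHom.mrange φ) (hg' : ↑g⁻¹ ∈ MonoidHom.mrange φ) :
    g ∈ (Units.map φ).range := by
  obtain ⟨u, hu⟩ := hg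
  obtain ⟨v, hv⟩ := hg'
  have huv : u * v = 1 := hφ (by rw [map_mul, hu, hv, Units.mul_inv, map_one])
  have hvu : v * u = 1 := hφ (by rw [map_mul, hu, hv, Units.inv_mul, map_one])
  exact ⟨⟨u, v, huv, hvu⟩, Units.ext hu⟩

-- Choose `s x ∈ S` and `g x` with `g x * φ (s x) * (g x)⁻¹ = x`; every other such pair for `x` is
-- `(g x * φ u⁻¹, u * s x * u⁻¹)` for a unique unit `u` of `A`.
theorem card_isConj_map_mul_card_units {S : Set A} (hφ : Function.Injective φ)
    (hS : ∀ s ∈ S, ∀ t, IsConj s t → t ∈ S)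
    (hlift : ∀ s ∈ S, ∀ t ∈ S, ∀ g : Bˣ, SemiconjBy ↑g (φ s) (φ t) → ↑g ∈ MonoidHom.mrange φ) :
    Nat.card {x : B | ∃ s ∈ S, IsConj (φ s) x} * Nat.card Aˣ = Nat.card Bˣ * Nat.card S := by
  rw [← Nat.card_prod, ← Nat.card_prod]
  choose! s hs g hg using fun x (hx : ∃ s ∈ S, IsConj (φ s) x) ↦ hx
  let f : {x : B | ∃ s ∈ S, IsConj (φ s) x} × Aˣ → Bˣ × S := fun p ↦
    (g p.1 * (Units.map φ p.2)⁻¹,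
      ⟨p.2 * s p.1 * ↑p.2⁻¹, hS _ (hs _ p.1.2) _ ⟨p.2, p.2.mk_semiconjBy _⟩⟩)
  have semiconj_f (p) : SemiconjBy ((f p).1 : B) (φ (f p).2) p.1 :=
    (hg _ p.1.2).mul_left (((p.2.mk_semiconjBy (s p.1)).map φ).units_inv_symm_left
      (a := Units.map φ p.2))
  refine Nat.card_eq_of_bijective f ⟨fun p p' hpp' ↦ ?_, fun ⟨h, t, ht⟩ ↦ ?_⟩
  · have hx : p.1 = p'.1 := by
      have h₁ := (semiconj_f p).eq
      rw [hpp', (semiconj_f p').eq, Units.mul_left_inj] at h₁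
      exact Subtype.ext h₁.symm
    have hu : g p.1 * (Units.map φ p.2)⁻¹ = g p'.1 * (Units.map φ p'.2)⁻¹ := congrArg Prod.fst hpp'
    rw [hx, mul_right_inj, _root_.inv_inj] at hu
    exact Prod.ext hx (Units.map_injective hφ hu)
  · obtain ⟨x, hx⟩ : ∃ x, SemiconjBy ↑h (φ t) x := ⟨_, h.mk_semiconjBy _⟩
    have hxC : ∃ s ∈ S, IsConj (φ s) x := ⟨t, ht, h, hx⟩
    have hgh : SemiconjBy ↑(h⁻¹ * g x) (φ (s x)) (φ t) := hx.units_inv_symm_left.mul_left (hg x hxC)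
    obtain ⟨u, hu⟩ := mem_range_units_map_of_mem_mrange hφ
      (hlift _ (hs x hxC) _ ht _ hgh) (hlift _ ht _ (hs x hxC) _ hgh.units_inv_symm_left)
    have hut : SemiconjBy ↑u (s x) t := by
      apply hφ
      rw [← hu] at hgh
      simpa only [map_mul, Units.coe_map] using hgh.eq
    refine ⟨(⟨x, hxC⟩, u), Prod.ext ?_ (Subtype.ext ?_)⟩
    · change g x * (Units.map φ u)⁻¹ = h
      rw [hu]
      group
    · exact u.mul_inv_eq_iff_eq_mul.mpr hut.eq

end ConjugacyCount

section DiagBlocks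

variable {R a b m : Type*} [Fintype a] [Fintype b] [Fintype m]
  [DecidableEq a] [DecidableEq b] [DecidableEq m]

/-- The block-diagonal embedding `(Y, Z) ↦ diag(Y, Z)`, as a multiplicative map; the bijection `e`
says which indices belong to which block. -/
def diagBlocks [Semiring R] (e : a ⊕ b ≃ m) : Matrix a a R × Matrix b b R →* Matrix m m R where
  toFun p := reindex e e (fromBlocks p.1 0 0 p.2)
  map_one' := by simp
  map_mul' p p' := by simp [submatrix_mul_equiv, fromBlocks_multiply]

theorem diagBlocks_injective [Semiring R] (e : a ⊕ b ≃ m) :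
    Function.Injective (diagBlocks (R := R) e) := by
  rintro ⟨Y, Z⟩ ⟨Y', Z'⟩ h
  obtain ⟨hY, -, -, hZ⟩ := fromBlocks_inj.mp ((reindex e e).injective h)
  exact Prod.ext hY hZ

theorem isIdempotentElem_diagBlocks_one_zero [Semiring R] (e : a ⊕ b ≃ m) :
    IsIdempotentElem (diagBlocks (R := R) e (1, 0)) := by
  rw [IsIdempotentElem, ← map_mul, Prod.mk_mul_mk, one_mul, zero_mul]

theorem isUnit_diagBlocks_one [Semiring R] (e : a ⊕ b ≃ m) {Y : Matrix a a R} (hY : IsUnit Y) :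
    IsUnit (diagBlocks e (Y, 1)) :=
  (Prod.isUnit_iff.mpr ⟨hY, isUnit_one⟩).map (diagBlocks e)

theorem rank_diagBlocks_one_zero {F : Type*} [Field F] (e : a ⊕ b ≃ m) :
    (diagBlocks (R := F) e (1, 0)).rank = Fintype.card a := by
  have hdiag : fromBlocks (1 : Matrix a a F) 0 0 (0 : Matrix b b F) =
      diagonal (Sum.elim 1 0) := by
    rw [← diagonal_one, ← diagonal_zero, fromBlocks_diagonal]
    rfl
  classical
  change (reindex e e (fromBlocks 1 0 0 0)).rank = _
  rw [rank_reindex, hdiag, rank_diagonal, Fintype.card_subtype, card_filter, Fintype.sum_sum_type]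
  simp

-- A power of the relation kills the nilpotent blocks; comparing off-diagonal blocks then shows
-- that those of `h` are annihilated by invertible matrices.
theorem mem_mrange_diagBlocks_of_semiconjBy [Semiring R] (e : a ⊕ b ≃ m)
    {Y Y' : Matrix a a R} {Z Z' : Matrix b b R} {h : Matrix m m R}
    (hY : IsUnit Y) (hZ : IsNilpotent Z) (hY' : IsUnit Y') (hZ' : IsNilpotent Z')
    (hh : SemiconjBy h (diagBlocks e (Y, Z)) (diagBlocks e (Y', Z'))) :
    h ∈ MonoidHom.mrange (diagBlocks (R := R) e) := by
  obtain ⟨k, hk⟩ := hZ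
  obtain ⟨l, hl⟩ := hZ'
  obtain ⟨H, rfl⟩ := (reindex e e).surjective h
  have hpow := (hh.pow_right (k + l)).eq
  rw [← map_pow, ← map_pow, Prod.pow_mk, Prod.pow_mk, pow_add Z, pow_add Z', hk, hl, zero_mul,
    mul_zero] at hpow
  rw [← H.fromBlocks_toBlocks] at hpow ⊢
  simp only [diagBlocks, MonoidHom.coe_mk, OneHom.coe_mk, reindex_apply, submatrix_mul_equiv,
    fromBlocks_multiply, Matrix.mul_zero, Matrix.zero_mul, add_zero] at hpow
  obtain ⟨-, h₁₂, h₂₁, -⟩ := fromBlocks_inj.mp ((reindex e e).injective hpow)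
  obtain ⟨u, hu⟩ := hY.pow (k + l)
  obtain ⟨v, hv⟩ := hY'.pow (k + l)
  have hH₁₂ : H.toBlocks₁₂ = 0 := by
    rw [← H.toBlocks₁₂.one_mul, ← v.inv_mul, hv, Matrix.mul_assoc, ← h₁₂, Matrix.mul_zero]
  have hH₂₁ : H.toBlocks₂₁ = 0 := by
    rw [← H.toBlocks₂₁.mul_one, ← u.mul_inv, hu, ← Matrix.mul_assoc, h₂₁, Matrix.zero_mul]
  exact ⟨(H.toBlocks₁₁, H.toBlocks₂₂), by rw [hH₁₂, hH₂₁]; rfl⟩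

/-- The pairs `(Y, Z)` with `Y` an invertible matrix in `S` and `Z` nilpotent: the candidates for
the two blocks of a Fitting decomposition. -/
def fittingPairs [Semiring R] (S : Set (Matrix a a R)ˣ) : Set (Matrix a a R × Matrix b b R) :=
  (Units.val '' S) ×ˢ {Z | IsNilpotent Z}

variable [Semiring R] {S : Set (Matrix a a R)ˣ}

theorem mem_fittingPairs_of_isConj (hS : ∀ Y ∈ S, ∀ Y', IsConj Y Y' → Y' ∈ S)
    {s t : Matrix a a R × Matrix b b R} (hs : s ∈ fittingPairs S) (hst : IsConj s t) :
    t ∈ fittingPairs S := by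
  obtain ⟨⟨Y, hY, hYs⟩, k, hk⟩ := hs
  obtain ⟨c, hc⟩ := (MonoidHom.fst _ _).map_isConj hst
  obtain ⟨c', hc'⟩ := ((MonoidHom.snd _ _).map_isConj hst).pow k
  refine ⟨⟨c * Y * c⁻¹, hS Y hY _ (isConj_iff.mpr ⟨c, rfl⟩), ?_⟩, k, ?_⟩
  · rw [Units.val_mul, Units.val_mul, hYs, Units.mul_inv_eq_iff_eq_mul]
    exact hc.eq
  · have hzero := hc'.eq
    rwa [MonoidHom.coe_snd, hk, Matrix.mul_zero, eq_comm, Units.mul_left_eq_zero] at hzero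

theorem card_fittingPairs (S : Set (Matrix a a R)ˣ) :
    Nat.card (fittingPairs S : Set (Matrix a a R × Matrix b b R)) =
      Nat.card S * Nat.card {Z : Matrix b b R | IsNilpotent Z} := by
  rw [fittingPairs, Nat.card_congr (Equiv.Set.prod _ _), Nat.card_prod,
    Nat.card_image_of_injective Units.val_injective]

theorem card_isConj_diagBlocks_mul_card_units (e : a ⊕ b ≃ m)
    (hS : ∀ Y ∈ S, ∀ Y', IsConj Y Y' → Y' ∈ S) :
    Nat.card {X | ∃ s ∈ fittingPairs S, IsConj (diagBlocks e s) X} *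
        (Nat.card (Matrix a a R)ˣ * Nat.card (Matrix b b R)ˣ) =
      Nat.card (Matrix m m R)ˣ * (Nat.card S * Nat.card {Z : Matrix b b R | IsNilpotent Z}) := by
  rw [← Nat.card_prod, ← Nat.card_congr MulEquiv.prodUnits.toEquiv, ← card_fittingPairs]
  refine card_isConj_map_mul_card_units (diagBlocks_injective e)
    (fun _ hs _ ↦ mem_fittingPairs_of_isConj hS hs) ?_
  rintro ⟨_, Z⟩ ⟨⟨Y, -, rfl⟩, hZ⟩ ⟨_, Z'⟩ ⟨⟨Y', -, rfl⟩, hZ'⟩ g hg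
  exact mem_mrange_diagBlocks_of_semiconjBy e Y.isUnit hZ Y'.isUnit hZ' hg

end DiagBlocks

section Fitting

theorem pow_card_eq_zero_of_isNilpotent {R n : Type*} [CommRing R] [IsDomain R] [Fintype n]
    [DecidableEq n] {Z : Matrix n n R} (hZ : IsNilpotent Z) : Z ^ Fintype.card n = 0 := by
  have hcharpoly : Z.charpoly = Polynomial.X ^ Fintype.card n :=
    sub_eq_zero.mp (isNilpotent_charpoly_sub_pow_of_isNilpotent hZ).eq_zero
  simpa [hcharpoly] using Z.aeval_self_charpoly

theorem rank_eq_of_isConj {R n : Type*} [CommRing R] [Fintype n] [DecidableEq n]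
    {M M' : Matrix n n R} (h : IsConj M M') : M.rank = M'.rank := by
  obtain ⟨g, hg⟩ := h
  have hdet : IsUnit (g : Matrix n n R).det := (isUnit_iff_isUnit_det _).mp g.isUnit
  rw [← rank_mul_eq_right_of_isUnit_det _ M hdet, hg.eq, rank_mul_eq_left_of_isUnit_det _ M' hdet]

variable {F : Type*} [Field F] {d : ℕ} {X : Matrix (Fin d) (Fin d) F}

theorem Vinv_eq_range_toLin'_pow (X : Matrix (Fin d) (Fin d) F) :
    Vinv X = LinearMap.range (toLin' (X ^ d)) := by
  rw [toLin'_pow, toLin'_apply', Vinv]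

theorem Vnil_eq_ker_toLin'_pow (X : Matrix (Fin d) (Fin d) F) :
    Vnil X = LinearMap.ker (toLin' (X ^ d)) := by
  rw [toLin'_pow, toLin'_apply', Vnil]

theorem isCompl_Vinv_Vnil (X : Matrix (Fin d) (Fin d) F) : IsCompl (Vinv X) (Vnil X) := by
  have hdim : Module.finrank F (Fin d → F) ≤
      Module.finrank F (Vinv X) + Module.finrank F (Vnil X) :=
    (LinearMap.finrank_range_add_finrank_ker (X.mulVecLin ^ d)).ge
  rw [Submodule.isCompl_iff_disjoint _ _ hdim]
  simpa [Vinv, Vnil, Module.End.genEigenrange_nat, Module.End.genEigenspace_nat] using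
    Module.End.generalized_eigenvec_disjoint_range_ker X.mulVecLin 0

theorem fittingProj_eq {p : (Fin d → F) →ₗ[F] (Fin d → F)} (hp : IsIdempotentElem p)
    (hrange : LinearMap.range p = Vinv X) (hker : LinearMap.ker p = Vnil X) :
    fittingProj X = p := by
  have hproj := LinearMap.IsIdempotentElem.eq_projection hp
  simp only [hrange, hker] at hproj
  rw [fittingProj, dif_pos (isCompl_Vinv_Vnil X)]
  exact hproj.symm

theorem finrank_Vinv_eq_rank_pow (X : Matrix (Fin d) (Fin d) F) :
    Module.finrank F (Vinv X) = (X ^ d).rank := by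
  rw [Vinv_eq_range_toLin'_pow, toLin'_apply', Matrix.rank]

theorem finrank_Vinv_eq_of_isConj {Y : Matrix (Fin d) (Fin d) F} (h : IsConj X Y) :
    Module.finrank F (Vinv X) = Module.finrank F (Vinv Y) := by
  rw [finrank_Vinv_eq_rank_pow, finrank_Vinv_eq_rank_pow, rank_eq_of_isConj (h.pow d)]

section BlockDiagonal

variable {a b : Type*} [Fintype a] [Fintype b] [DecidableEq a] [DecidableEq b]
  (e : a ⊕ b ≃ Fin d) {Y : Matrix a a F} {Z : Matrix b b F}

theorem diagBlocks_pow_of_isNilpotent (hZ : IsNilpotent Z) :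
    diagBlocks e (Y, Z) ^ d = diagBlocks e (Y ^ d, 0) := by
  have hb : Fintype.card b ≤ d := by
    simpa using Fintype.card_le_of_injective _ (e.injective.comp Sum.inr_injective)
  rw [← map_pow, Prod.pow_mk, pow_eq_zero_of_le hb (pow_card_eq_zero_of_isNilpotent hZ)]

theorem Vinv_diagBlocks (hY : IsUnit Y) (hZ : IsNilpotent Z) :
    Vinv (diagBlocks e (Y, Z)) = LinearMap.range (toLin' (diagBlocks e (1, 0))) := by
  have hfactor : diagBlocks e (Y, Z) ^ d = diagBlocks e (1, 0) * diagBlocks e (Y ^ d, 1) := by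
    rw [diagBlocks_pow_of_isNilpotent e hZ, ← map_mul, Prod.mk_mul_mk, one_mul, zero_mul]
  rw [Vinv_eq_range_toLin'_pow, hfactor, toLin'_mul, LinearMap.range_comp_of_range_eq_top]
  rw [← LinearMap.isUnit_iff_range_eq_top, isUnit_toLin'_iff]
  exact isUnit_diagBlocks_one e (hY.pow d)

theorem Vnil_diagBlocks (hY : IsUnit Y) (hZ : IsNilpotent Z) :
    Vnil (diagBlocks e (Y, Z)) = LinearMap.ker (toLin' (diagBlocks e (1, 0))) := by
  have hfactor : diagBlocks e (Y, Z) ^ d = diagBlocks e (Y ^ d, 1) * diagBlocks e (1, 0) := by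
    rw [diagBlocks_pow_of_isNilpotent e hZ, ← map_mul, Prod.mk_mul_mk, mul_one, mul_zero]
  rw [Vnil_eq_ker_toLin'_pow, hfactor, toLin'_mul, LinearMap.ker_comp_of_ker_eq_bot]
  rw [← LinearMap.isUnit_iff_ker_eq_bot, isUnit_toLin'_iff]
  exact isUnit_diagBlocks_one e (hY.pow d)

theorem fittingProj_diagBlocks (hY : IsUnit Y) (hZ : IsNilpotent Z) :
    fittingProj (diagBlocks e (Y, Z)) = toLin' (diagBlocks e (1, 0)) :=
  fittingProj_eq ((isIdempotentElem_diagBlocks_one_zero e).map (toLinAlgEquiv' (R := F)))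
    (Vinv_diagBlocks e hY hZ).symm (Vnil_diagBlocks e hY hZ).symm

theorem finrank_Vinv_diagBlocks (hY : IsUnit Y) (hZ : IsNilpotent Z) :
    Module.finrank F (Vinv (diagBlocks e (Y, Z))) = Fintype.card a := by
  rw [Vinv_diagBlocks e hY hZ, ← rank_diagBlocks_one_zero (F := F) e, toLin'_apply', Matrix.rank]

end BlockDiagonal

end Fitting

section Existence

theorem isConj_toMatrix_toMatrix {R M n : Type*} [CommRing R] [AddCommGroup M] [Module R M]
    [Fintype n] [DecidableEq n] (B B' : Module.Basis n R M) (f : M →ₗ[R] M) :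
    IsConj (LinearMap.toMatrix B B f) (LinearMap.toMatrix B' B' f) := by
  refine ⟨⟨B'.toMatrix B, B.toMatrix B', B'.toMatrix_mul_toMatrix_flip B,
    B.toMatrix_mul_toMatrix_flip B'⟩, ?_⟩
  change B'.toMatrix B * _ = _ * B'.toMatrix B
  rw [basis_toMatrix_mul_linearMap_toMatrix, linearMap_toMatrix_mul_basis_toMatrix]

theorem exists_basis_toMatrix_eq_diagBlocks {R M a b m : Type*} [CommRing R] [AddCommGroup M]
    [Module R M] [Fintype a] [Fintype b] [Fintype m] [DecidableEq a] [DecidableEq b]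
    [DecidableEq m] (e : a ⊕ b ≃ m) {U W : Submodule R M} (h : IsCompl U W) {f : M →ₗ[R] M}
    (hU : ∀ x ∈ U, f x ∈ U) (hW : ∀ x ∈ W, f x ∈ W) (BU : Module.Basis a R U)
    (BW : Module.Basis b R W) :
    ∃ B : Module.Basis m R M, LinearMap.toMatrix B B f = diagBlocks e
      (LinearMap.toMatrix BU BU (f.restrict hU), LinearMap.toMatrix BW BW (f.restrict hW)) := by
  let ψ := Submodule.prodEquivOfIsCompl U W h
  have hψ (p : U × W) : f (ψ p) = ψ ((f.restrict hU).prodMap (f.restrict hW) p) := by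
    simp [ψ, Submodule.coe_prodEquivOfIsCompl', LinearMap.restrict_apply]
  refine ⟨((BU.prod BW).map ψ).reindex e, ?_⟩
  change _ = reindex e e (fromBlocks _ 0 0 _)
  rw [← LinearMap.toMatrix_prodMap]
  ext r c
  simp only [reindex_apply, submatrix_apply, LinearMap.toMatrix_apply, Module.Basis.reindex_apply,
    Module.Basis.map_apply, Module.Basis.repr_reindex_apply, Module.Basis.map_repr, hψ,
    LinearEquiv.trans_apply, LinearEquiv.symm_apply_apply]

variable {F : Type*} [Field F] {d : ℕ}

theorem mulVecLin_mem_Vinv (X : Matrix (Fin d) (Fin d) F) :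
    ∀ x ∈ Vinv X, X.mulVecLin x ∈ Vinv X := by
  rintro _ ⟨y, rfl⟩
  refine ⟨X.mulVecLin y, ?_⟩
  rw [← Module.End.mul_apply, ← Module.End.mul_apply, ← pow_succ, ← pow_succ']

theorem mulVecLin_mem_Vnil (X : Matrix (Fin d) (Fin d) F) :
    ∀ x ∈ Vnil X, X.mulVecLin x ∈ Vnil X := by
  intro x hx
  rw [Vnil, LinearMap.mem_ker] at hx ⊢
  rw [← Module.End.mul_apply, ← pow_succ, pow_succ', Module.End.mul_apply, hx, map_zero]

theorem ker_mulVecLin_le_Vnil (X : Matrix (Fin d) (Fin d) F) :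
    LinearMap.ker X.mulVecLin ≤ Vnil X := by
  simpa [Vnil] using Module.End.ker_pow_le_ker_pow_finrank X.mulVecLin 1

theorem isUnit_restrict_Vinv (X : Matrix (Fin d) (Fin d) F) :
    IsUnit (X.mulVecLin.restrict (mulVecLin_mem_Vinv X)) := by
  rw [LinearMap.isUnit_iff_ker_eq_bot, LinearMap.ker_eq_bot']
  rintro ⟨x, hx⟩ hXx
  have hker : x ∈ LinearMap.ker X.mulVecLin := congrArg Subtype.val hXx
  exact Subtype.ext <| Submodule.disjoint_def.mp (isCompl_Vinv_Vnil X).disjoint x hx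
    (ker_mulVecLin_le_Vnil X hker)

theorem isNilpotent_restrict_Vnil (X : Matrix (Fin d) (Fin d) F) :
    IsNilpotent (X.mulVecLin.restrict (mulVecLin_mem_Vnil X)) := by
  refine ⟨d, LinearMap.ext fun x ↦ Subtype.ext ?_⟩
  rw [Module.End.pow_restrict]
  exact LinearMap.mem_ker.mp x.2

theorem exists_isConj_diagBlocks {i n : ℕ} (e : Fin i ⊕ Fin n ≃ Fin d)
    (X : Matrix (Fin d) (Fin d) F) (hX : Module.finrank F (Vinv X) = i) :
    ∃ (Y : GL (Fin i) F) (Z : Matrix (Fin n) (Fin n) F),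
      IsNilpotent Z ∧ IsConj (diagBlocks e (↑Y, Z)) X := by
  have hnil : Module.finrank F (Vnil X) = n := by
    have hcard : i + n = d := by simpa using Fintype.card_congr e
    have hsum := Submodule.finrank_add_eq_of_isCompl (isCompl_Vinv_Vnil X)
    rw [Module.finrank_fin_fun, hX] at hsum
    omega
  let BU := Module.finBasisOfFinrankEq F (Vinv X) hX
  let BW := Module.finBasisOfFinrankEq F (Vnil X) hnil
  obtain ⟨B, hB⟩ := exists_basis_toMatrix_eq_diagBlocks e (isCompl_Vinv_Vnil X)
    (mulVecLin_mem_Vinv X) (mulVecLin_mem_Vnil X) BU BW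
  obtain ⟨Y, hY⟩ := (isUnit_restrict_Vinv X).map (LinearMap.toMatrixAlgEquiv BU)
  refine ⟨Y, _, (LinearMap.isNilpotent_toMatrix_iff BW _).mpr (isNilpotent_restrict_Vnil X), ?_⟩
  have hX' : LinearMap.toMatrix (Pi.basisFun F (Fin d)) (Pi.basisFun F (Fin d)) X.mulVecLin = X :=
    LinearMap.toMatrix'_toLin' X
  have hconj := isConj_toMatrix_toMatrix B (Pi.basisFun F (Fin d)) X.mulVecLin
  rw [hX', hB] at hconj
  rw [hY]
  exact hconj

end Existence

section NI

variable {F : Type*} [Field F] {d i : ℕ} {N : Set (Matrix (Fin d) (Fin d) F)}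

theorem IsNI.mem_of_isConj (hN : IsNI N) {X X' : Matrix (Fin d) (Fin d) F} (h : IsConj X X')
    (hX : X ∈ N) : X' ∈ N := by
  obtain ⟨g, hg⟩ := h
  have := hN.1 X hX g⁻¹
  rwa [inv_inv, hg.eq, g.mul_inv_cancel_right] at this

theorem isNI_univ : IsNI (Set.univ : Set (Matrix (Fin d) (Fin d) F)) := by
  simp [IsNI]

theorem IsNI.diagBlocks_mem_iff {a b : Type*} [Fintype a] [Fintype b] [DecidableEq a]
    [DecidableEq b] (hN : IsNI N) (e : a ⊕ b ≃ Fin d) {Y : Matrix a a F} {Z : Matrix b b F}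
    (hY : IsUnit Y) (hZ : IsNilpotent Z) :
    diagBlocks e (Y, Z) ∈ N ↔ diagBlocks e (Y, 0) ∈ N := by
  rw [hN.2, fittingProj_diagBlocks e hY hZ, ← toLin'_apply', ← toLin'_mul,
    LinearMap.toMatrix'_toLin', ← map_mul, Prod.mk_mul_mk, mul_one, mul_zero]

/-- The bijection placing an `i × i` block before a `(d - i) × (d - i)` block, as in
`diag(Y, 0)`. -/
def splitEquiv (h : i ≤ d) : Fin i ⊕ Fin (d - i) ≃ Fin d :=
  finSumFinEquiv.trans (finCongr (Nat.add_sub_of_le h))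

theorem embedBlock_eq_diagBlocks (h : i ≤ d) (Y : Matrix (Fin i) (Fin i) F) :
    embedBlock d Y = diagBlocks (splitEquiv h) (Y, 0) := by
  change _ = reindex _ _ (fromBlocks _ 0 0 0)
  rw [← Equiv.symm_apply_eq, reindex_symm]
  ext (r | r) (c | c) <;> simp [embedBlock, splitEquiv]

/-- The paper's `N(i)`: the members of `N` whose invertible part has dimension `i`. -/
def NIlevel (N : Set (Matrix (Fin d) (Fin d) F)) (i : ℕ) : Set (Matrix (Fin d) (Fin d) F) :=
  {X | X ∈ N ∧ Module.finrank F (Vinv X) = i}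

theorem IsNI.mem_NIsub_of_isConj (hN : IsNI N) (h : i ≤ d) {Y Y' : GL (Fin i) F}
    (hY : Y ∈ NIsub N i) (hYY' : IsConj Y Y') : Y' ∈ NIsub N i := by
  refine hN.mem_of_isConj ?_ hY
  rw [embedBlock_eq_diagBlocks h, embedBlock_eq_diagBlocks h]
  obtain ⟨c, hc⟩ := (Units.coeHom _).map_isConj hYY'
  have hconj : IsConj ((↑Y, 0) : Matrix (Fin i) (Fin i) F × Matrix (Fin (d - i)) (Fin (d - i)) F)
      (↑Y', 0) :=
    ⟨MulEquiv.prodUnits.symm (c, 1), Prod.ext hc.eq (SemiconjBy.one_left 0).eq⟩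
  exact (diagBlocks (splitEquiv h)).map_isConj hconj

theorem IsNI.NIlevel_eq_setOf_isConj (hN : IsNI N) (h : i ≤ d) :
    NIlevel N i =
      {X | ∃ s ∈ fittingPairs (NIsub N i), IsConj (diagBlocks (splitEquiv h) s) X} := by
  have mem_NIsub_iff {Y : GL (Fin i) F} {Z : Matrix (Fin (d - i)) (Fin (d - i)) F}
      (hZ : IsNilpotent Z) : Y ∈ NIsub N i ↔ diagBlocks (splitEquiv h) (↑Y, Z) ∈ N := by
    rw [hN.diagBlocks_mem_iff _ Y.isUnit hZ, ← embedBlock_eq_diagBlocks]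
    rfl
  ext X
  constructor
  · rintro ⟨hXN, hX⟩
    obtain ⟨Y, Z, hZ, hYZ⟩ := exists_isConj_diagBlocks (splitEquiv h) X hX
    exact ⟨(↑Y, Z), ⟨⟨Y, (mem_NIsub_iff hZ).mpr (hN.mem_of_isConj hYZ.symm hXN), rfl⟩, hZ⟩, hYZ⟩
  · rintro ⟨⟨_, Z⟩, ⟨⟨Y, hY, rfl⟩, hZ⟩, hYZ⟩
    refine ⟨hN.mem_of_isConj hYZ ((mem_NIsub_iff hZ).mp hY), ?_⟩
    rw [← finrank_Vinv_eq_of_isConj hYZ, finrank_Vinv_diagBlocks _ Y.isUnit hZ, Fintype.card_fin]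

theorem IsNI.card_NIlevel_mul (hN : IsNI N) (h : i ≤ d) :
    Nat.card (NIlevel N i) * (Nat.card (GL (Fin i) F) * Nat.card (GL (Fin (d - i)) F)) =
      Nat.card (GL (Fin d) F) * (Nat.card (NIsub N i) *
        Nat.card {Z : Matrix (Fin (d - i)) (Fin (d - i)) F | IsNilpotent Z}) := by
  rw [hN.NIlevel_eq_setOf_isConj h]
  exact card_isConj_diagBlocks_mul_card_units _ fun _ hY _ ↦ hN.mem_NIsub_of_isConj h hY

theorem card_eq_sum_card_NIlevel [Finite F] (N : Set (Matrix (Fin d) (Fin d) F)) :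
    Nat.card N = ∑ i ∈ range (d + 1), Nat.card (NIlevel N i) := by
  classical
  cases nonempty_fintype F
  have hmaps : Set.MapsTo (fun X ↦ Module.finrank F (Vinv X))
      (N.toFinset : Set (Matrix (Fin d) (Fin d) F)) (range (d + 1)) := by
    intro X _
    simpa [Nat.lt_succ_iff] using Submodule.finrank_le (Vinv X)
  rw [Nat.card_eq_card_toFinset, card_eq_sum_card_fiberwise hmaps]
  refine sum_congr rfl fun i _ ↦ ?_
  rw [Nat.card_eq_card_toFinset]
  congr 1
  ext X
  rw [Set.mem_toFinset, mem_filter, Set.mem_toFinset]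
  rfl

end NI

section Counting

variable (F : Type*) [Field F]

/-- The ratio `|{Z ∈ M(n,q) : Z nilpotent}| / |GL(n,q)|`. -/
noncomputable def nilpotentRatio (n : ℕ) : ℝ :=
  Nat.card {Z : Matrix (Fin n) (Fin n) F | IsNilpotent Z} / Nat.card (GL (Fin n) F)

theorem cast_card_GL_ne_zero [Finite F] (n : ℕ) : (Nat.card (GL (Fin n) F) : ℝ) ≠ 0 :=
  Nat.cast_ne_zero.mpr Nat.card_pos.ne'

variable {F} in
theorem IsNI.card_div_card_GL [Finite F] {d : ℕ} {N : Set (Matrix (Fin d) (Fin d) F)}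
    (hN : IsNI N) :
    (Nat.card N : ℝ) / Nat.card (GL (Fin d) F) = ∑ i ∈ range (d + 1),
      nilpotentRatio F (d - i) * ((Nat.card (NIsub N i) : ℝ) / Nat.card (GL (Fin i) F)) := by
  rw [card_eq_sum_card_NIlevel, Nat.cast_sum, sum_div]
  refine sum_congr rfl fun i hi ↦ ?_
  have hcard := congrArg (Nat.cast : ℕ → ℝ) (hN.card_NIlevel_mul (mem_range_succ_iff.mp hi))
  push_cast at hcard
  rw [nilpotentRatio, div_mul_div_comm, div_eq_div_iff (cast_card_GL_ne_zero F d)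
    (mul_ne_zero (cast_card_GL_ne_zero F _) (cast_card_GL_ne_zero F _))]
  linear_combination hcard

variable [Fintype F]

theorem card_GL_eq_pow_mul_omegaqd (n : ℕ) :
    (Nat.card (GL (Fin n) F) : ℝ) =
      (Fintype.card F : ℝ) ^ (n * n) * omegaqd n (Fintype.card F) := by
  have hq : (Fintype.card F : ℝ) ≠ 0 := Nat.cast_ne_zero.mpr Fintype.card_ne_zero
  have hfactor (k : ℕ) (hk : k < n) :
      ((Fintype.card F ^ n - Fintype.card F ^ (n - 1 - k) : ℕ) : ℝ) =
        (Fintype.card F : ℝ) ^ n * (1 - (Fintype.card F : ℝ)⁻¹ ^ (1 + k)) := by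
    have hn : (Fintype.card F : ℝ) ^ n =
        (Fintype.card F : ℝ) ^ (n - 1 - k) * (Fintype.card F : ℝ) ^ (1 + k) := by
      rw [← pow_add]
      congr 1
      omega
    rw [Nat.cast_sub (Nat.pow_le_pow_right Fintype.card_pos (by omega)), Nat.cast_pow,
      Nat.cast_pow, mul_one_sub, hn, mul_assoc, ← mul_pow, mul_inv_cancel₀ hq, one_pow, mul_one]
  rw [Matrix.card_GL_field, Fin.prod_univ_eq_prod_range
    (fun i ↦ Fintype.card F ^ n - Fintype.card F ^ i) n, ← prod_range_reflect, Nat.cast_prod,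
    prod_congr rfl fun k hk ↦ hfactor k (mem_range.mp hk), prod_mul_distrib, prod_const, card_range,
    ← pow_mul, omegaqd, ← Ico_add_one_right_eq_Icc, prod_Ico_eq_prod_range, Nat.add_sub_cancel]

theorem omegaqd_card_ne_zero (n : ℕ) : omegaqd n (Fintype.card F) ≠ 0 :=
  right_ne_zero_of_mul (card_GL_eq_pow_mul_omegaqd F n ▸ cast_card_GL_ne_zero F n)

theorem omegaqd_succ (n q : ℕ) :
    omegaqd (n + 1) q = omegaqd n q * (1 - (q : ℝ)⁻¹ ^ (n + 1)) :=
  prod_Icc_succ_top (Nat.le_add_left 1 n) _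

theorem card_matrix_div_card_GL (n : ℕ) :
    (Nat.card (Set.univ : Set (Matrix (Fin n) (Fin n) F)) : ℝ) / Nat.card (GL (Fin n) F) =
      (omegaqd n (Fintype.card F))⁻¹ := by
  have hq : (Fintype.card F : ℝ) ≠ 0 := Nat.cast_ne_zero.mpr Fintype.card_ne_zero
  have hcard : Nat.card (Matrix (Fin n) (Fin n) F) = Fintype.card F ^ (n * n) := by
    simp [Matrix, pow_mul]
  rw [Nat.card_univ, hcard, card_GL_eq_pow_mul_omegaqd, Nat.cast_pow,
    div_mul_cancel_left₀ (pow_ne_zero _ hq)]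

theorem sum_nilpotentRatio (n : ℕ) :
    ∑ j ∈ range (n + 1), nilpotentRatio F j = (omegaqd n (Fintype.card F))⁻¹ := by
  have hNIsub (i : ℕ) : NIsub (Set.univ : Set (Matrix (Fin n) (Fin n) F)) i = Set.univ :=
    Set.eq_univ_of_forall fun _ ↦ Set.mem_univ _
  rw [← card_matrix_div_card_GL, isNI_univ.card_div_card_GL, ← sum_flip]
  refine sum_congr rfl fun i _ ↦ ?_
  rw [hNIsub, Nat.card_univ, div_self (cast_card_GL_ne_zero F i), mul_one]

-- The Fine–Herstein count `q ^ (n * (n - 1))` of nilpotent matrices, divided by `|GL(n,q)|`.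
theorem nilpotentRatio_eq (n : ℕ) :
    nilpotentRatio F n = (Fintype.card F : ℝ)⁻¹ ^ n / omegaqd n (Fintype.card F) := by
  have hsum := sum_nilpotentRatio F n
  cases n with
  | zero => simpa [omegaqd] using hsum
  | succ n =>
    rw [sum_range_succ, sum_nilpotentRatio F n, ← eq_sub_iff_add_eq'] at hsum
    have hω := omegaqd_card_ne_zero F n
    have hω' := omegaqd_card_ne_zero F (n + 1)
    rw [hsum, eq_div_iff hω', sub_mul, inv_mul_cancel₀ hω', omegaqd_succ, inv_mul_cancel_left₀ hω,
      sub_sub_cancel]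

end Counting

theorem stmt0 (q d : ℕ) (hq : IsPrimePow q) (hd : 0 < d)
    (F : Type*) [Field F] [Fintype F] (hF : Fintype.card F = q)
    (N : Set (Matrix (Fin d) (Fin d) F)) (hN : IsNI N) :
    (Nat.card N : ℝ) / Nat.card (GL (Fin d) F) =
      ∑ i ∈ Finset.range (d + 1),
        ((q : ℝ))⁻¹ ^ (d - i) / omegaqd (d - i) q *
          ((Nat.card (NIsub N i) : ℝ) / Nat.card (GL (Fin i) F)) := by
  subst hF
  rw [hN.card_div_card_GL]
  exact sum_congr rfl fun i _ ↦ by rw [nilpotentRatio_eq]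
end

section
/- Let N be a nilpotent-independent (NI) subset of M(d,q) and let 0 \le i \le d. Then |N(i)| = s_i \cdot q^{(d-i)(d-1)} \cdot |N_i|, where s_i is the number of i-dimensional subspaces of \mathbb{F}_q^d. -/
open Matrix Finset

/-!
`Vinv X = W` holds exactly when `X` maps `W` onto itself and acts nilpotently modulo `W`. In a
basis adapted to `W` this says `X = [[A, B], [0, C]]` with `A` invertible and `C` nilpotent. The
projection `π_X` is then `[[1, K], [0, 0]]` for some `K`, so `X ∘ π_X = [[A, A * K], [0, 0]]` is
conjugate to `diag(A, 0)` by a unipotent matrix, and nilpotent-independence makes the membership of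
`X` in `N` depend on `A` alone. Each of the `s_i` subspaces `W` therefore contributes
`|N_i| * q ^ (i * m) * n_m` matrices, where `m = d - i` and `n_m` is the number of nilpotent `m × m`
matrices.

The Fine–Herstein formula `n_m = q ^ (m * (m - 1))` comes from the same count: applied to the set of
all `d × d` matrices and summed over `i`, it gives a recursion for `n_d` which the proposed value
solves because the sum telescopes.
-/

section Endomorphism

variable {K V : Type*} [DivisionRing K] [AddCommGroup V] [Module K V] [FiniteDimensional K V]

lemma range_pow_eq_range_pow_finrank_of_le (f : Module.End K V) {n : ℕ}
    (hn : Module.finrank K V ≤ n) :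
    LinearMap.range (f ^ n) = LinearMap.range (f ^ Module.finrank K V) := by
  refine Submodule.eq_of_le_of_finrank_eq ?_ ?_
  · rw [← Nat.add_sub_cancel' hn, pow_add]
    exact LinearMap.range_comp_le_range _ _
  · have hker := Module.End.ker_pow_eq_ker_pow_finrank_of_le (f := f) hn
    have h₁ := (f ^ n).finrank_range_add_finrank_ker
    have h₂ := (f ^ Module.finrank K V).finrank_range_add_finrank_ker
    rw [hker] at h₁
    omega

lemma isCompl_range_pow_ker_pow (f : Module.End K V) {n : ℕ} (hn : Module.finrank K V ≤ n) :
    IsCompl (LinearMap.range (f ^ n)) (LinearMap.ker (f ^ n)) := by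
  obtain ⟨m, hm, hle⟩ := (f.eventually_isCompl_ker_pow_range_pow.and
    (Filter.eventually_ge_atTop (Module.finrank K V))).exists
  rw [range_pow_eq_range_pow_finrank_of_le f hn, Module.End.ker_pow_eq_ker_pow_finrank_of_le hn,
    ← range_pow_eq_range_pow_finrank_of_le f hle, ← Module.End.ker_pow_eq_ker_pow_finrank_of_le hle]
  exact hm.symm

lemma range_pow_eq_iff (f : Module.End K V) {n : ℕ} (hn : Module.finrank K V ≤ n)
    (W : Submodule K V) :
    LinearMap.range (f ^ n) = W ↔ W.map f = W ∧ ∃ k, LinearMap.range (f ^ k) ≤ W := by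
  constructor
  · rintro rfl
    refine ⟨?_, n, le_rfl⟩
    rw [← LinearMap.range_comp, ← Module.End.mul_eq_comp, ← pow_succ',
      range_pow_eq_range_pow_finrank_of_le f hn,
      range_pow_eq_range_pow_finrank_of_le f (hn.trans n.le_succ)]
  · rintro ⟨hmap, k, hk⟩
    have hpow : ∀ j, W.map (f ^ j) = W := fun j ↦ by
      induction j with
      | zero => exact Submodule.map_id W
      | succ j ih => rw [pow_succ, Module.End.mul_eq_comp, Submodule.map_comp, hmap, ih]
    refine le_antisymm ?_ ((hpow n).ge.trans LinearMap.map_le_range)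
    calc LinearMap.range (f ^ n)
        = LinearMap.range (f ^ (k + n)) := by
          rw [range_pow_eq_range_pow_finrank_of_le f hn,
            range_pow_eq_range_pow_finrank_of_le f (hn.trans (Nat.le_add_left n k))]
      _ ≤ LinearMap.range (f ^ k) := by rw [pow_add]; exact LinearMap.range_comp_le_range _ _
      _ ≤ W := hk

lemma exists_linearEquiv_map_eq {W W' : Submodule K V}
    (h : Module.finrank K W = Module.finrank K W') :
    ∃ e : V ≃ₗ[K] V, W.map e.toLinearMap = W' := by
  obtain ⟨U, hU⟩ := W.exists_isCompl
  obtain ⟨U', hU'⟩ := W'.exists_isCompl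
  have hUU' : Module.finrank K U = Module.finrank K U' := by
    have := Submodule.finrank_add_eq_of_isCompl hU
    have := Submodule.finrank_add_eq_of_isCompl hU'
    omega
  let e : V ≃ₗ[K] V := (W.prodEquivOfIsCompl U hU).symm ≪≫ₗ
    ((LinearEquiv.ofFinrankEq W W' h).prodCongr (LinearEquiv.ofFinrankEq U U' hUU')) ≪≫ₗ
    W'.prodEquivOfIsCompl U' hU'
  have hle : W.map e.toLinearMap ≤ W' := by
    rintro _ ⟨w, hw, rfl⟩
    have hsymm : (W.prodEquivOfIsCompl U hU).symm w = (⟨w, hw⟩, 0) :=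
      Submodule.prodEquivOfIsCompl_symm_apply_left _ _ hU ⟨w, hw⟩
    simp [e, hsymm, -Submodule.prodEquivOfIsCompl_symm_apply]
  exact ⟨e, Submodule.eq_of_le_of_finrank_eq hle ((e.finrank_map_eq W).trans h)⟩

end Endomorphism

section Counting

lemma card_eq_card_mul_of_card_fiber_eq {α β : Type*} [Finite α] [Finite β] {s : Set α}
    {t : Set β} {f : α → β} (hf : Set.MapsTo f s t) {c : ℕ}
    (hc : ∀ b ∈ t, Nat.card {a | a ∈ s ∧ f a = b} = c) : Nat.card s = Nat.card t * c := by
  have := Fintype.ofFinite t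
  have hfib : ∀ b : t, Nat.card {a : s // hf.restrict f s t a = b} = c := fun b ↦ by
    rw [← hc b b.2]
    exact Nat.card_congr ((Equiv.subtypeEquivRight fun _ ↦ Subtype.ext_iff).trans
      (Equiv.subtypeSubtypeEquivSubtypeInter (· ∈ s) (f · = b)))
  rw [Nat.card_congr (Equiv.sigmaFiberEquiv (hf.restrict f s t)).symm, Nat.card_sigma,
    Finset.sum_congr rfl fun b _ ↦ hfib b, Finset.sum_const, smul_eq_mul, Finset.card_univ,
    Nat.card_eq_fintype_card]

variable {K V : Type*} [Field K] [AddCommGroup V] [Module K V] [Finite V]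

lemma card_linearIndependent_span_eq [Finite K] (W : Submodule K V) {k : ℕ}
    (hW : Module.finrank K W = k) :
    Nat.card {s : Fin k → V | LinearIndependent K s ∧ Submodule.span K (Set.range s) = W} =
      Nat.card (GL (Fin k) K) := by
  have := Fintype.ofFinite K
  have hcard := card_linearIndependent (K := K) (V := W) hW.ge
  rw [hW, ← Matrix.card_GL_field] at hcard
  rw [← hcard]
  symm
  refine Nat.card_eq_of_bijective
    (fun t : {t : Fin k → W // LinearIndependent K t} ↦ ⟨W.subtype ∘ t.1, ?_, ?_⟩) ⟨?_, ?_⟩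
  · exact t.2.map' W.subtype W.ker_subtype
  · refine Submodule.eq_of_le_of_finrank_eq (Submodule.span_le.2 ?_) ?_
    · rintro _ ⟨j, rfl⟩
      exact (t.1 j).2
    · rw [finrank_span_eq_card (t.2.map' W.subtype W.ker_subtype), hW, Fintype.card_fin]
  · intro t t' h
    exact Subtype.ext (funext fun j ↦ Subtype.ext (congrFun (congrArg Subtype.val h) j))
  · rintro ⟨s, hs, rfl⟩
    exact ⟨⟨_, linearIndependent_span hs⟩, rfl⟩

lemma card_submodule_finrank_mul_card_GL [Fintype K] {k : ℕ} (hk : k ≤ Module.finrank K V) :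
    Nat.card {W : Submodule K V | Module.finrank K W = k} * Nat.card (GL (Fin k) K) =
      ∏ j ∈ Finset.range k, (Fintype.card K ^ Module.finrank K V - Fintype.card K ^ j) := by
  rw [Finset.prod_range, ← card_linearIndependent hk]
  symm
  refine card_eq_card_mul_of_card_fiber_eq (f := fun s ↦ Submodule.span K (Set.range s)) ?_
    fun W hW ↦ card_linearIndependent_span_eq W hW
  intro s hs
  exact (finrank_span_eq_card hs).trans (Fintype.card_fin k)

end Counting

section FittingDecomposition

variable {F : Type*} [Field F] {d : ℕ}

lemma Vinv_eq_iff (X : Matrix (Fin d) (Fin d) F) (W : Submodule F (Fin d → F)) :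
    Vinv X = W ↔ W.map X.mulVecLin = W ∧ ∃ k, LinearMap.range (X.mulVecLin ^ k) ≤ W :=
  range_pow_eq_iff _ (Module.finrank_fin_fun F).le W

lemma isProj_fittingProj (X : Matrix (Fin d) (Fin d) F) :
    LinearMap.IsProj (Vinv X) (fittingProj X) := by
  have h : IsCompl (Vinv X) (Vnil X) :=
    isCompl_range_pow_ker_pow X.mulVecLin (Module.finrank_fin_fun F).le
  rw [fittingProj, dif_pos h]
  exact ⟨fun v ↦ Subtype.property _,
    fun v hv ↦ congrArg Subtype.val (Submodule.projectionOnto_apply_left h ⟨v, hv⟩)⟩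

lemma Vinv_conj (g : GL (Fin d) F) (X : Matrix (Fin d) (Fin d) F) :
    Vinv (g.1 * X * g⁻¹.1) = (Vinv X).map g.1.mulVecLin := by
  have hsurj : LinearMap.range g⁻¹.1.mulVecLin = ⊤ :=
    LinearMap.range_eq_top.2 (Matrix.mulVec_surjective_iff_isUnit.2 g⁻¹.isUnit)
  simp only [Vinv, ← Matrix.toLin'_apply', ← Matrix.toLin'_pow, Units.conj_pow]
  simp only [Matrix.toLin'_apply', Matrix.mulVecLin_mul, LinearMap.range_comp, hsurj,
    Submodule.map_top]

lemma exists_GL_map_eq {W W' : Submodule F (Fin d → F)}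
    (h : Module.finrank F W = Module.finrank F W') :
    ∃ g : GL (Fin d) F, W.map g.1.mulVecLin = W' := by
  obtain ⟨e, he⟩ := exists_linearEquiv_map_eq h
  refine ⟨Matrix.GeneralLinearGroup.toLin.symm
    (LinearMap.GeneralLinearGroup.ofLinearEquiv e), ?_⟩
  rw [← he]
  congr 1
  exact congrArg Units.val (Matrix.GeneralLinearGroup.toLin.apply_symm_apply
    (LinearMap.GeneralLinearGroup.ofLinearEquiv e))

end FittingDecomposition

section BlockUpper

variable {R : Type*} [CommRing R] {i m : ℕ}

/-- The block upper triangular matrix `[[A, B], [0, C]]` with rows and columns numbered by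
`Fin (i + m)`. -/
def blockUpper (A : Matrix (Fin i) (Fin i) R) (B : Matrix (Fin i) (Fin m) R)
    (C : Matrix (Fin m) (Fin m) R) : Matrix (Fin (i + m)) (Fin (i + m)) R :=
  Matrix.reindexAlgEquiv R R finSumFinEquiv (fromBlocks A B 0 C)

variable (R i m) in
/-- The span of the first `i` standard basis vectors of `R ^ (i + m)`, encoded as the vectors whose
last `m` coordinates vanish. -/
def initialSubmodule : Submodule R (Fin (i + m) → R) :=
  LinearMap.ker (LinearMap.funLeft R R (Fin.natAdd i))

lemma append_inj {α : Type*} {u u' : Fin i → α} {w w' : Fin m → α} :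
    Fin.append u w = Fin.append u' w' ↔ u = u' ∧ w = w' :=
  (Fin.appendEquiv i m).injective.eq_iff.trans Prod.mk_inj

lemma append_mem_initialSubmodule {u : Fin i → R} {w : Fin m → R} :
    Fin.append u w ∈ initialSubmodule R i m ↔ w = 0 := by
  simp [initialSubmodule, LinearMap.funLeft, funext_iff]

lemma mem_initialSubmodule_iff {v : Fin (i + m) → R} :
    v ∈ initialSubmodule R i m ↔ ∃ u : Fin i → R, v = Fin.append u 0 := by
  constructor
  · rw [← Fin.append_castAdd_natAdd (f := v), append_mem_initialSubmodule]
    intro h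
    exact ⟨_, by rw [h]⟩
  · rintro ⟨u, rfl⟩
    exact append_mem_initialSubmodule.2 rfl

lemma blockUpper_mulVec_append (A : Matrix (Fin i) (Fin i) R) (B : Matrix (Fin i) (Fin m) R)
    (C : Matrix (Fin m) (Fin m) R) (u : Fin i → R) (w : Fin m → R) :
    blockUpper A B C *ᵥ Fin.append u w = Fin.append (A *ᵥ u + B *ᵥ w) (C *ᵥ w) := by
  have happend : Fin.append u w = Sum.elim u w ∘ finSumFinEquiv.symm := by
    ext j
    induction j using Fin.addCases <;> simp
  rw [happend, blockUpper, Matrix.coe_reindexAlgEquiv, Matrix.reindex_apply,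
    Matrix.submatrix_mulVec_equiv, Function.comp_assoc, Equiv.symm_symm, Equiv.symm_comp_self,
    Function.comp_id, Matrix.fromBlocks_mulVec]
  ext j
  induction j using Fin.addCases <;> simp

lemma blockUpper_mul (A A' : Matrix (Fin i) (Fin i) R) (B B' : Matrix (Fin i) (Fin m) R)
    (C C' : Matrix (Fin m) (Fin m) R) :
    blockUpper A B C * blockUpper A' B' C' = blockUpper (A * A') (A * B' + B * C') (C * C') := by
  simp only [blockUpper, ← map_mul, Matrix.fromBlocks_multiply, Matrix.mul_zero, Matrix.zero_mul,
    add_zero, zero_add]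

lemma blockUpper_one : blockUpper 1 0 1 = (1 : Matrix (Fin (i + m)) (Fin (i + m)) R) := by
  rw [blockUpper, Matrix.fromBlocks_one, map_one]

lemma blockUpper_inj {A A' : Matrix (Fin i) (Fin i) R} {B B' : Matrix (Fin i) (Fin m) R}
    {C C' : Matrix (Fin m) (Fin m) R} :
    blockUpper A B C = blockUpper A' B' C' ↔ A = A' ∧ B = B' ∧ C = C' := by
  simp [blockUpper, Matrix.fromBlocks_inj, -Matrix.coe_reindexAlgEquiv]

lemma exists_eq_blockUpper {Y : Matrix (Fin (i + m)) (Fin (i + m)) R}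
    (hY : ∀ v ∈ initialSubmodule R i m, Y *ᵥ v ∈ initialSubmodule R i m) :
    ∃ A B C, Y = blockUpper (i := i) (m := m) A B C := by
  set Z := (Matrix.reindexAlgEquiv R R finSumFinEquiv).symm Y with hZ
  have hZ₂₁ : Z.toBlocks₂₁ = 0 := by
    ext a b
    have hmem : Pi.single (Fin.castAdd m b) 1 ∈ initialSubmodule R i m := by
      ext j
      have hne : Fin.natAdd i j ≠ Fin.castAdd m b := by
        rw [Ne, Fin.ext_iff, Fin.val_natAdd, Fin.val_castAdd]
        omega
      simp [LinearMap.funLeft, hne]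
    simpa [hZ, Matrix.toBlocks₂₁] using congrFun (hY _ hmem) a
  refine ⟨Z.toBlocks₁₁, Z.toBlocks₁₂, Z.toBlocks₂₂, ?_⟩
  rw [blockUpper, ← hZ₂₁, Matrix.fromBlocks_toBlocks, hZ, AlgEquiv.apply_symm_apply]

lemma map_blockUpper_initialSubmodule_eq_iff (A : Matrix (Fin i) (Fin i) R)
    (B : Matrix (Fin i) (Fin m) R) (C : Matrix (Fin m) (Fin m) R) :
    (initialSubmodule R i m).map (blockUpper A B C).mulVecLin = initialSubmodule R i m ↔
      IsUnit A := by
  rw [← Matrix.mulVec_surjective_iff_isUnit]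
  constructor
  · intro hmap u
    obtain ⟨v, hv, hvu⟩ := hmap.ge (append_mem_initialSubmodule.2 (rfl : (0 : Fin m → R) = 0))
    obtain ⟨u', rfl⟩ := mem_initialSubmodule_iff.1 hv
    rw [Matrix.mulVecLin_apply, blockUpper_mulVec_append, append_inj] at hvu
    exact ⟨u', by simpa using hvu.1⟩
  · intro hA
    ext v
    simp only [Submodule.mem_map, mem_initialSubmodule_iff, Matrix.mulVecLin_apply]
    constructor
    · rintro ⟨_, ⟨u, rfl⟩, rfl⟩
      exact ⟨A *ᵥ u, by simp [blockUpper_mulVec_append]⟩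
    · rintro ⟨u, rfl⟩
      obtain ⟨u', rfl⟩ := hA u
      exact ⟨_, ⟨u', rfl⟩, by simp [blockUpper_mulVec_append]⟩

lemma exists_range_blockUpper_pow_le_iff (A : Matrix (Fin i) (Fin i) R)
    (B : Matrix (Fin i) (Fin m) R) (C : Matrix (Fin m) (Fin m) R) :
    (∃ k, LinearMap.range ((blockUpper A B C).mulVecLin ^ k) ≤ initialSubmodule R i m) ↔
      IsNilpotent C := by
  have hsurj : Function.Surjective (LinearMap.funLeft R R (Fin.natAdd (m := m) i)) :=
    LinearMap.funLeft_surjective_of_injective R R _ (Fin.natAdd_injective m i)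
  have hcomm : C.mulVecLin ∘ₗ LinearMap.funLeft R R (Fin.natAdd i) =
      LinearMap.funLeft R R (Fin.natAdd i) ∘ₗ (blockUpper A B C).mulVecLin := by
    refine LinearMap.ext fun v ↦ ?_
    obtain ⟨u, w, rfl⟩ : ∃ u w, v = Fin.append u w := ⟨_, _, Fin.append_castAdd_natAdd.symm⟩
    ext j
    simp [blockUpper_mulVec_append, LinearMap.funLeft, Function.comp_def]
  refine exists_congr fun k ↦ ?_
  rw [initialSubmodule, LinearMap.range_le_ker_iff,
    ← Module.End.commute_pow_left_of_commute hcomm,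
    ← LinearMap.zero_comp (LinearMap.funLeft R R (Fin.natAdd (m := m) i)),
    LinearMap.cancel_right hsurj, ← Matrix.toLin'_apply', ← Matrix.toLin'_pow,
    LinearEquiv.map_eq_zero_iff]

lemma exists_eq_blockUpper_of_isProj {P : Matrix (Fin (i + m)) (Fin (i + m)) R}
    (hP : LinearMap.IsProj (initialSubmodule R i m) P.mulVecLin) :
    ∃ B, P = blockUpper 1 B 0 := by
  obtain ⟨A, B, C, rfl⟩ := exists_eq_blockUpper fun v _ ↦ hP.map_mem v
  have hA : A = 1 := Matrix.ext_of_mulVec_single fun j ↦ by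
    have hfix := hP.map_id _ (append_mem_initialSubmodule (u := Pi.single j 1).2 rfl)
    rw [Matrix.mulVecLin_apply, blockUpper_mulVec_append, append_inj] at hfix
    rw [Matrix.one_mulVec]
    simpa only [Matrix.mulVec_zero, add_zero] using hfix.1
  have hC : C = 0 := Matrix.ext_of_mulVec_single fun j ↦ by
    have hmem := hP.map_mem (Fin.append 0 (Pi.single j 1))
    rw [Matrix.mulVecLin_apply, blockUpper_mulVec_append, append_mem_initialSubmodule] at hmem
    rw [hmem, Matrix.zero_mulVec]
  exact ⟨B, by rw [hA, hC]⟩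

lemma finrank_initialSubmodule (F : Type*) [Field F] (i m : ℕ) :
    Module.finrank F (initialSubmodule F i m) = i := by
  have hsurj : LinearMap.range (LinearMap.funLeft F F (Fin.natAdd (m := m) i)) = ⊤ :=
    LinearMap.range_eq_top.2
      (LinearMap.funLeft_surjective_of_injective F F _ (Fin.natAdd_injective m i))
  have hrank := (LinearMap.funLeft F F (Fin.natAdd (m := m) i)).finrank_range_add_finrank_ker
  rw [hsurj, finrank_top, Module.finrank_fin_fun, Module.finrank_fin_fun, add_comm] at hrank
  exact Nat.add_right_cancel hrank

lemma embedBlock_eq_blockUpper {F : Type*} [Field F] (A : Matrix (Fin i) (Fin i) F) :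
    embedBlock (i + m) A = blockUpper A 0 0 := by
  ext r c
  induction r using Fin.addCases <;> induction c using Fin.addCases <;>
    simp [embedBlock, blockUpper]

end BlockUpper

section NilpotentIndependent

variable {F : Type*} [Field F] {i m : ℕ}

lemma Vinv_blockUpper_eq_iff (A : Matrix (Fin i) (Fin i) F) (B : Matrix (Fin i) (Fin m) F)
    (C : Matrix (Fin m) (Fin m) F) :
    Vinv (blockUpper A B C) = initialSubmodule F i m ↔ IsUnit A ∧ IsNilpotent C := by
  rw [Vinv_eq_iff, map_blockUpper_initialSubmodule_eq_iff, exists_range_blockUpper_pow_le_iff]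

lemma exists_eq_blockUpper_of_Vinv_eq {X : Matrix (Fin (i + m)) (Fin (i + m)) F}
    (hX : Vinv X = initialSubmodule F i m) : ∃ A B C, X = blockUpper (i := i) (m := m) A B C :=
  exists_eq_blockUpper fun _ hv ↦ ((Vinv_eq_iff X _).1 hX).1.le ⟨_, hv, rfl⟩

namespace IsNI

lemma univ {d : ℕ} : IsNI (Set.univ : Set (Matrix (Fin d) (Fin d) F)) :=
  ⟨fun _ _ _ ↦ trivial, fun _ ↦ Iff.rfl⟩

lemma conj_mem_iff {d : ℕ} {N : Set (Matrix (Fin d) (Fin d) F)} (hN : IsNI N) (g : GL (Fin d) F)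
    (X : Matrix (Fin d) (Fin d) F) : g.1 * X * g⁻¹.1 ∈ N ↔ X ∈ N := by
  refine ⟨fun h ↦ ?_, fun h ↦ by simpa using hN.1 _ h g⁻¹⟩
  simpa [mul_assoc] using hN.1 _ h g

lemma mul_fittingProj_mem_iff {d : ℕ} {N : Set (Matrix (Fin d) (Fin d) F)} (hN : IsNI N)
    (X : Matrix (Fin d) (Fin d) F) : X * LinearMap.toMatrix' (fittingProj X) ∈ N ↔ X ∈ N := by
  rw [hN.2 X, LinearMap.toMatrix'_comp, ← Matrix.toLin'_apply', LinearMap.toMatrix'_toLin']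

variable {N : Set (Matrix (Fin (i + m)) (Fin (i + m)) F)}

lemma blockUpper_mem_iff (hN : IsNI N) {A : Matrix (Fin i) (Fin i) F} (hA : IsUnit A)
    (B : Matrix (Fin i) (Fin m) F) {C : Matrix (Fin m) (Fin m) F} (hC : IsNilpotent C) :
    blockUpper A B C ∈ N ↔ embedBlock (i + m) A ∈ N := by
  obtain ⟨K, hK⟩ : ∃ K, LinearMap.toMatrix' (fittingProj (blockUpper A B C)) =
      blockUpper 1 K 0 := by
    refine exists_eq_blockUpper_of_isProj ?_
    rw [← (Vinv_blockUpper_eq_iff A B C).2 ⟨hA, hC⟩, ← Matrix.toLin'_apply',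
      Matrix.toLin'_toMatrix']
    exact isProj_fittingProj _
  let g : GL (Fin (i + m)) F :=
    { val := blockUpper 1 (-K) 1
      inv := blockUpper 1 K 1
      val_inv := by simp [blockUpper_mul, blockUpper_one]
      inv_val := by simp [blockUpper_mul, blockUpper_one] }
  have hconj : g.1 * blockUpper A 0 0 * g⁻¹.1 = blockUpper A B C * blockUpper 1 K 0 := by
    change blockUpper 1 (-K) 1 * blockUpper A 0 0 * blockUpper 1 K 1 = _
    simp [blockUpper_mul]
  rw [← hN.mul_fittingProj_mem_iff, hK, ← hconj, hN.conj_mem_iff, embedBlock_eq_blockUpper]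

lemma card_Vinv_eq_initialSubmodule (hN : IsNI N) :
    Nat.card {X | X ∈ N ∧ Vinv X = initialSubmodule F i m} =
      Nat.card (NIsub N i × Matrix (Fin i) (Fin m) F ×
        {C : Matrix (Fin m) (Fin m) F // IsNilpotent C}) := by
  symm
  refine Nat.card_eq_of_bijective
    (fun p ↦ ⟨blockUpper p.1.1.1 p.2.1 p.2.2.1, ?_, ?_⟩) ⟨?_, ?_⟩
  · exact (hN.blockUpper_mem_iff p.1.1.isUnit _ p.2.2.2).2 p.1.2
  · exact (Vinv_blockUpper_eq_iff _ _ _).2 ⟨p.1.1.isUnit, p.2.2.2⟩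
  · rintro ⟨⟨A, hA⟩, B, C, hC⟩ ⟨⟨A', hA'⟩, B', C', hC'⟩ h
    obtain ⟨hAA', rfl, rfl⟩ := blockUpper_inj.1 (congrArg Subtype.val h)
    obtain rfl : A = A' := Units.ext hAA'
    rfl
  · rintro ⟨X, hX, hXV⟩
    obtain ⟨A, B, C, rfl⟩ := exists_eq_blockUpper_of_Vinv_eq hXV
    obtain ⟨⟨A, rfl⟩, hC⟩ := (Vinv_blockUpper_eq_iff A B C).1 hXV
    exact ⟨⟨⟨A, (hN.blockUpper_mem_iff A.isUnit B hC).1 hX⟩, B, C, hC⟩, rfl⟩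

lemma card_Vinv_eq (hN : IsNI N) {W : Submodule F (Fin (i + m) → F)}
    (hW : Module.finrank F W = i) :
    Nat.card {X | X ∈ N ∧ Vinv X = W} =
      Nat.card (NIsub N i × Matrix (Fin i) (Fin m) F ×
        {C : Matrix (Fin m) (Fin m) F // IsNilpotent C}) := by
  obtain ⟨g, rfl⟩ := exists_GL_map_eq ((finrank_initialSubmodule F i m).trans hW.symm)
  have hg : Function.Injective g.1.mulVecLin := Matrix.mulVec_injective_iff_isUnit.2 g.isUnit
  rw [← hN.card_Vinv_eq_initialSubmodule]
  symm
  refine Nat.card_congr ((MulAction.toPerm (ConjAct.toConjAct g)).subtypeEquiv fun X ↦ ?_)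
  rw [MulAction.toPerm_apply, ConjAct.units_smul_def, ConjAct.ofConjAct_toConjAct]
  exact and_congr (hN.conj_mem_iff g X).symm
    (by rw [Vinv_conj, (Submodule.map_injective_of_injective hg).eq_iff])

lemma card_finrank_Vinv_eq [Fintype F] (hN : IsNI N) :
    Nat.card {X | X ∈ N ∧ Module.finrank F (Vinv X) = i} =
      Nat.card {W : Submodule F (Fin (i + m) → F) | Module.finrank F W = i} *
        (Nat.card (NIsub N i) * (Fintype.card F ^ (i * m) *
          Nat.card {C : Matrix (Fin m) (Fin m) F // IsNilpotent C})) := by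
  have hcard : Nat.card (Matrix (Fin i) (Fin m) F) = Fintype.card F ^ (i * m) := by
    rw [Module.natCard_eq_pow_finrank (K := F), Module.finrank_matrix]
    simp
  rw [← hcard, ← Nat.card_prod, ← Nat.card_prod]
  refine card_eq_card_mul_of_card_fiber_eq (f := Vinv) (fun X hX ↦ hX.2) fun W hW ↦ ?_
  rw [← hN.card_Vinv_eq hW]
  refine Nat.card_congr (Equiv.subtypeEquivRight fun X ↦ ?_)
  constructor
  · exact fun h ↦ ⟨h.1.1, h.2⟩
  · rintro ⟨hX, rfl⟩
    exact ⟨⟨hX, hW⟩, rfl⟩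

end IsNI

end NilpotentIndependent

section NilpotentCount

lemma sum_prod_pow_sub_pow_eq {q : ℕ} (hq : 0 < q) (d : ℕ) :
    ∑ i ∈ Finset.range (d + 1),
      (∏ j ∈ Finset.range i, (q ^ d - q ^ j)) * q ^ ((d - i) * (d - 1)) = q ^ (d * d) := by
  -- The `i`-th term is `Q i - Q (i + 1)`, where
  -- `Q k = (∏ j < k, (q ^ d - q ^ j)) * q ^ (d * (d - k))`.
  have htelescope : ∀ k ≤ d,
      ∑ i ∈ Finset.range k, (∏ j ∈ Finset.range i, (q ^ d - q ^ j)) * q ^ ((d - i) * (d - 1)) +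
        (∏ j ∈ Finset.range k, (q ^ d - q ^ j)) * q ^ (d * (d - k)) = q ^ (d * d) := by
    intro k hk
    induction k with
    | zero => simp
    | succ k ih =>
      rw [← ih (by omega), Finset.sum_range_succ, Finset.prod_range_succ, add_assoc, mul_assoc,
        ← mul_add]
      congr 2
      obtain ⟨r, rfl⟩ := Nat.exists_eq_add_of_le' hk
      have hle : q ^ k ≤ q ^ (r + (k + 1)) := Nat.pow_le_pow_right hq (by omega)
      have hpred : r + (k + 1) - 1 = r + k := rfl
      have hsub : r + (k + 1) - k = r + 1 := by omega
      calc q ^ ((r + (k + 1) - k) * (r + (k + 1) - 1)) +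
            (q ^ (r + (k + 1)) - q ^ k) * q ^ ((r + (k + 1)) * (r + (k + 1) - (k + 1)))
          = (q ^ k + (q ^ (r + (k + 1)) - q ^ k)) * q ^ ((r + (k + 1)) * r) := by
            rw [hpred, hsub, Nat.add_sub_cancel]
            ring
        _ = q ^ ((r + (k + 1)) * (r + (k + 1) - k)) := by
            rw [Nat.add_sub_cancel' hle, hsub]
            ring
  rw [Finset.sum_range_succ]
  simpa using htelescope d le_rfl

lemma mul_add_mul_pred (i m : ℕ) : i * m + m * (m - 1) = m * (i + m - 1) := by
  cases m with
  | zero => simp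
  | succ m => rw [← add_assoc, Nat.add_sub_cancel, Nat.add_sub_cancel]; ring

variable (F : Type*) [Field F] [Fintype F]

lemma card_finrank_Vinv_eq (i m : ℕ) :
    Nat.card {X : Matrix (Fin (i + m)) (Fin (i + m)) F | Module.finrank F (Vinv X) = i} =
      (∏ j ∈ Finset.range i, (Fintype.card F ^ (i + m) - Fintype.card F ^ j)) *
        (Fintype.card F ^ (i * m) *
          Nat.card {C : Matrix (Fin m) (Fin m) F // IsNilpotent C}) := by
  have hW := card_submodule_finrank_mul_card_GL (K := F) (V := Fin (i + m) → F) (k := i)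
    (by simp)
  have hNI := (IsNI.univ (F := F) (d := i + m)).card_finrank_Vinv_eq
  have hGL : NIsub (Set.univ : Set (Matrix (Fin (i + m)) (Fin (i + m)) F)) i = Set.univ := rfl
  simp only [Set.mem_univ, true_and, hGL, Nat.card_univ] at hNI
  rw [hNI, ← mul_assoc, hW, Module.finrank_fin_fun]

lemma sum_card_finrank_Vinv_eq (d : ℕ) :
    ∑ i ∈ Finset.range (d + 1),
      Nat.card {X : Matrix (Fin d) (Fin d) F | Module.finrank F (Vinv X) = i} =
        Fintype.card F ^ (d * d) := by
  classical
  have hcard : Fintype.card (Matrix (Fin d) (Fin d) F) = Fintype.card F ^ (d * d) := by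
    rw [Module.card_eq_pow_finrank (K := F), Module.finrank_matrix]
    simp
  have hmaps : ∀ X ∈ (Finset.univ : Finset (Matrix (Fin d) (Fin d) F)),
      Module.finrank F (Vinv X) ∈ Finset.range (d + 1) := fun X _ ↦ by
    have := Submodule.finrank_le (Vinv X)
    rw [Module.finrank_fin_fun] at this
    exact Finset.mem_range_succ_iff.2 this
  rw [← hcard, ← Finset.card_univ, Finset.card_eq_sum_card_fiberwise hmaps]
  refine Finset.sum_congr rfl fun i _ ↦ ?_
  exact Nat.card_eq_fintype_card.trans (Fintype.card_subtype _)

theorem card_isNilpotent_matrix (d : ℕ) :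
    Nat.card {C : Matrix (Fin d) (Fin d) F // IsNilpotent C} = Fintype.card F ^ (d * (d - 1)) := by
  induction d using Nat.strong_induction_on with
  | _ d ih =>
    have hterm : ∀ i m, i + m = d →
        Nat.card {X : Matrix (Fin d) (Fin d) F | Module.finrank F (Vinv X) = i} =
          (∏ j ∈ Finset.range i, (Fintype.card F ^ d - Fintype.card F ^ j)) *
            (Fintype.card F ^ (i * m) *
              Nat.card {C : Matrix (Fin m) (Fin m) F // IsNilpotent C}) := by
      rintro i m rfl
      exact card_finrank_Vinv_eq F i m
    have hsucc : ∀ i ∈ Finset.range d,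
        Nat.card {X : Matrix (Fin d) (Fin d) F | Module.finrank F (Vinv X) = i + 1} =
          (∏ j ∈ Finset.range (i + 1), (Fintype.card F ^ d - Fintype.card F ^ j)) *
            Fintype.card F ^ ((d - (i + 1)) * (d - 1)) := by
      intro i hi
      have hid : i + 1 + (d - (i + 1)) = d := Nat.add_sub_cancel' (Finset.mem_range.1 hi)
      rw [hterm _ _ hid, ih _ (by omega), ← pow_add, mul_add_mul_pred, hid]
    have hsum := (sum_card_finrank_Vinv_eq F d).trans
      (sum_prod_pow_sub_pow_eq (q := Fintype.card F) Fintype.card_pos d).symm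
    rw [Finset.sum_range_succ', Finset.sum_range_succ', Finset.sum_congr rfl hsucc,
      hterm 0 d (zero_add d)] at hsum
    simpa using hsum

end NilpotentCount

theorem stmt1 (q d : ℕ) (hq : IsPrimePow q) (hd : 0 < d)
    (F : Type*) [Field F] [Fintype F] (hF : Fintype.card F = q)
    (N : Set (Matrix (Fin d) (Fin d) F)) (hN : IsNI N) (i : ℕ) (hi : i ≤ d) :
    Nat.card {X : Matrix (Fin d) (Fin d) F | X ∈ N ∧ Module.finrank F (Vinv X) = i} =
      Nat.card {W : Submodule F (Fin d → F) | Module.finrank F W = i} *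
        q ^ ((d - i) * (d - 1)) * Nat.card (NIsub N i) := by
  subst hF
  obtain ⟨m, rfl⟩ := Nat.exists_eq_add_of_le hi
  rw [hN.card_finrank_Vinv_eq, card_isNilpotent_matrix, ← pow_add, mul_add_mul_pred,
    Nat.add_sub_cancel_left]
  ring
end
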